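/- arXiv:1106.1588 — 2 statements merged into one kernel-verified Lean document; each statement's English description precedes it below -/
import Mathlib

section
/- Let A be a commutative ring, let γ, δ, s, t ∈ A, let q(X,Y) = X² + γXY + δY², let R = A[X,Y]/(q(X,Y) − q(s,t)), and let u, v be the images of X, Y in R. Let β be the R-linear endomorphism of R² given by the matrix [[v − t, −(u + s + γt)], [u − s, δv + δt + γu]]. Then the R-linear map π : R² → R defined by π(a, b) = (u − s)·a − (v − t)·b has image equal to the ideal J = (u − s, v − t) of R and kernel equal to the image of β; consequently the cokernel of β is isomorphic as an R-module to the ideal J. -/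
noncomputable section
open MvPolynomial

/-- `q(X,Y) - q(s,t)` in `A[X,Y]`, where `q(X,Y) = X² + γXY + δY²`. -/
def keyRel (A : Type*) [CommRing A] (γ δ s t : A) : MvPolynomial (Fin 2) A :=
  X 0 ^ 2 + C γ * X 0 * X 1 + C δ * X 1 ^ 2 - C (s ^ 2 + γ * s * t + δ * t ^ 2)

/-- `R = A[X,Y]/(q(X,Y) - q(s,t))`. -/
abbrev KeyRing (A : Type*) [CommRing A] (γ δ s t : A) :=
  MvPolynomial (Fin 2) A ⧸ Ideal.span {keyRel A γ δ s t}

/-- The quotient map `A[X,Y] → R`. -/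
def kmk (A : Type*) [CommRing A] (γ δ s t : A) :
    MvPolynomial (Fin 2) A →+* KeyRing A γ δ s t :=
  Ideal.Quotient.mk (Ideal.span {keyRel A γ δ s t})

/-- The `R`-linear map `R² → R`, `(a, b) ↦ c·a - d·b`. -/
def pairMap {R : Type*} [CommRing R] (c d : R) : (Fin 2 → R) →ₗ[R] R where
  toFun a := c * a 0 - d * a 1
  map_add' a b := by simp [mul_add]; ring
  map_smul' r a := by simp [smul_eq_mul]; ring

/-! If `w = f * h + g * k` and the only syzygies of `(f, g)` over `S` are the multiples of the
Koszul one, then a syzygy of `(f, g)` over `S ⧸ (w)` lifts to a relation `f * a - g * b = w * c`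
in `S`. Subtracting `c` times the expression of `w` leaves a syzygy over `S`, so modulo `w` all
syzygies come from the Koszul one and from `(-h, k)`. Here `(f, g) = (X - s, Y - t)`, whose
syzygies are Koszul because a translation turns the regular sequence of variables into it, and
`w = q(X, Y) - q(s, t)` lies in the ideal `(X - s, Y - t)` because it vanishes at `(s, t)`. -/

open RingTheory.Sequence
open scoped Pointwise

section RegularSequence

theorem mem_span_X_image_of_X_mul_mem {σ A : Type*} [CommSemiring A] {s : Set σ} {j : σ}
    (hj : j ∉ s) {p : MvPolynomial σ A} (hp : X j * p ∈ Ideal.span (X '' s)) :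
    p ∈ Ideal.span (X '' s) := by
  rw [mem_ideal_span_X_image] at hp ⊢
  intro m hm
  rw [support_X_mul] at hp
  obtain ⟨i, hi, hne⟩ := hp _ (Finset.mem_map_of_mem _ hm)
  have hji : j ≠ i := fun h => hj (h ▸ hi)
  exact ⟨i, hi, by simpa [Finsupp.single_eq_of_ne' hji] using hne⟩

variable {σ A : Type*} [CommRing A]

theorem isWeaklyRegular_map_X {l : List σ} (hl : l.Nodup) :
    IsWeaklyRegular (MvPolynomial σ A) (l.map (X : σ → MvPolynomial σ A)) := by
  refine ⟨fun n hn => ?_⟩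
  rw [List.length_map] at hn
  have hspan : (Ideal.ofList ((l.map (X : σ → MvPolynomial σ A)).take n) • ⊤ :
      Ideal (MvPolynomial σ A)) = Ideal.span (X '' {i | i ∈ l.take n}) := by
    rw [smul_eq_mul, Ideal.mul_top, ← List.map_take]
    exact congrArg Ideal.span (Set.ext fun _ => List.mem_map)
  have hnotMem : l[n] ∉ l.take n := fun hmem =>
    List.disjoint_take_drop hl le_rfl hmem (List.mem_drop_iff_getElem.2 ⟨0, by lia, rfl⟩)
  rw [hspan, isSMulRegular_quotient_iff_mem_of_smul_mem, List.getElem_map]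
  exact fun p hp => mem_span_X_image_of_X_mul_mem (s := {i | i ∈ l.take n}) hnotMem hp

/-- The automorphism `X i ↦ X i - a i` of the polynomial ring, which corresponds to translating
affine space by `-a`; it carries the variables to generators of the ideal of the point `a`. -/
def translationEquiv (a : σ → A) : MvPolynomial σ A ≃ₐ[A] MvPolynomial σ A :=
  AlgEquiv.ofAlgHom (aeval fun i => X i - C (a i)) (aeval fun i => X i + C (a i))
    (by ext i : 1; simp [algebraMap_eq]) (by ext i : 1; simp [algebraMap_eq])

theorem translationEquiv_X (a : σ → A) (i : σ) : translationEquiv a (X i) = X i - C (a i) :=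
  aeval_X _ i

theorem isWeaklyRegular_map_X_sub_C {l : List σ} (hl : l.Nodup) (a : σ → A) :
    IsWeaklyRegular (MvPolynomial σ A) (l.map fun i => X i - C (a i)) := by
  refine (AddEquiv.isWeaklyRegular_congr (e := (translationEquiv a).toAddEquiv) ?_).1
    (isWeaklyRegular_map_X hl)
  rw [List.forall₂_map_left_iff, List.forall₂_map_right_iff, List.forall₂_same]
  intro i _ p
  rw [← translationEquiv_X]
  exact map_mul (translationEquiv a) (X i) p

end RegularSequence

section PairMap

variable {R : Type*} [CommRing R]

theorem pairMap_apply (c d : R) (z : Fin 2 → R) : pairMap c d z = c * z 0 - d * z 1 :=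
  rfl

theorem mem_ker_pairMap {c d : R} {z : Fin 2 → R} :
    z ∈ LinearMap.ker (pairMap c d) ↔ c * z 0 = d * z 1 := by
  rw [LinearMap.mem_ker, pairMap_apply, sub_eq_zero]

theorem range_pairMap (c d : R) :
    LinearMap.range (pairMap c d) = (Ideal.span {c, d} : Ideal R) := by
  ext z
  rw [LinearMap.mem_range, Ideal.mem_span_pair]
  constructor
  · rintro ⟨a, rfl⟩
    exact ⟨a 0, -a 1, by rw [pairMap_apply]; ring⟩
  · rintro ⟨a, b, rfl⟩
    exact ⟨![a, -b], by simp only [pairMap_apply, Matrix.cons_val_zero, Matrix.cons_val_one]; ring⟩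

theorem ker_pairMap_of_isWeaklyRegular {f g : R} (hfg : IsWeaklyRegular R [f, g]) :
    LinearMap.ker (pairMap f g) = Submodule.span R {![g, f]} := by
  rw [isWeaklyRegular_cons_iff, isWeaklyRegular_singleton_iff] at hfg
  obtain ⟨hf, hg⟩ := hfg
  ext z
  rw [mem_ker_pairMap, Submodule.mem_span_singleton]
  constructor
  · intro hz
    have hmem : g • z 1 ∈ f • (⊤ : Submodule R R) := ⟨z 0, trivial, hz⟩
    obtain ⟨d, -, hd : f * d = z 1⟩ := mem_of_isSMulRegular_quotient_of_smul_mem hg hmem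
    have hd' : g * d = z 0 := hf (by simp only [smul_eq_mul]; linear_combination g * hd - hz)
    refine ⟨d, ?_⟩
    ext i
    fin_cases i
    · simpa [mul_comm] using hd'
    · simpa [mul_comm] using hd
  · rintro ⟨d, rfl⟩
    simp only [Pi.smul_apply, smul_eq_mul, Matrix.cons_val_zero, Matrix.cons_val_one]
    ring

theorem fin_two_mulVec {α : Type*} [NonUnitalNonAssocSemiring α] (a b c d : α) (w : Fin 2 → α) :
    !![a, b; c, d].mulVec w = ![a * w 0 + b * w 1, c * w 0 + d * w 1] := by
  ext i
  fin_cases i <;> exact Matrix.vec2_dotProduct _ w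

theorem range_mulVecLin_le_ker_pairMap {c d x y : R} (hrel : c * x + d * y = 0) :
    LinearMap.range (!![d, -x; c, y]).mulVecLin ≤ LinearMap.ker (pairMap c d) := by
  rintro _ ⟨w, rfl⟩
  rw [mem_ker_pairMap, Matrix.mulVecLin_apply, fin_two_mulVec]
  simp only [Matrix.cons_val_zero, Matrix.cons_val_one]
  linear_combination -w 1 * hrel

end PairMap

section Hypersurface

variable {S R : Type*} [CommRing S] [CommRing R] {φ : S →+* R} {f g h k : S}

theorem ker_pairMap_map_eq_range (hφ : Function.Surjective φ)
    (hker : RingHom.ker φ = Ideal.span {f * h + g * k})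
    (hfg : LinearMap.ker (pairMap f g) = Submodule.span S {![g, f]}) :
    LinearMap.ker (pairMap (φ f) (φ g)) =
      LinearMap.range (!![φ g, -φ h; φ f, φ k]).mulVecLin := by
  apply le_antisymm
  · intro z hz
    obtain ⟨a, ha⟩ := hφ (z 0)
    obtain ⟨b, hb⟩ := hφ (z 1)
    have hmem : f * a - g * b ∈ RingHom.ker φ := by
      rw [RingHom.mem_ker, map_sub, map_mul, map_mul, ha, hb, sub_eq_zero]
      exact mem_ker_pairMap.1 hz
    rw [hker] at hmem
    obtain ⟨c, hc⟩ := Ideal.mem_span_singleton.1 hmem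
    have hsyz : ![a - h * c, b + k * c] ∈ LinearMap.ker (pairMap f g) :=
      mem_ker_pairMap.2 (by
        simp only [Matrix.cons_val_zero, Matrix.cons_val_one]
        linear_combination hc)
    rw [hfg] at hsyz
    obtain ⟨d, hd⟩ := Submodule.mem_span_singleton.1 hsyz
    have hd₀ : d * g = a - h * c := congrFun hd 0
    have hd₁ : d * f = b + k * c := congrFun hd 1
    have hz₀ : φ g * φ d + -φ h * -φ c = z 0 := by
      rw [← ha, ← sub_add_cancel a (h * c), ← hd₀, map_add, map_mul, map_mul]
      ring
    have hz₁ : φ f * φ d + φ k * -φ c = z 1 := by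
      rw [← hb, ← add_sub_cancel_right b (k * c), ← hd₁, map_sub, map_mul, map_mul]
      ring
    refine ⟨![φ d, -φ c], ?_⟩
    rw [Matrix.mulVecLin_apply, fin_two_mulVec]
    ext i
    fin_cases i
    · exact hz₀
    · exact hz₁
  · apply range_mulVecLin_le_ker_pairMap
    rw [← map_mul, ← map_mul, ← map_add, ← RingHom.mem_ker, hker]
    exact Ideal.mem_span_singleton_self _

theorem stmt9_general (hφ : Function.Surjective φ)
    (hker : RingHom.ker φ = Ideal.span {f * h + g * k})
    (hfg : LinearMap.ker (pairMap f g) = Submodule.span S {![g, f]}) :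
    LinearMap.range (pairMap (φ f) (φ g)) = (Ideal.span {φ f, φ g} : Ideal R) ∧
    LinearMap.ker (pairMap (φ f) (φ g)) =
      LinearMap.range (!![φ g, -φ h; φ f, φ k]).mulVecLin ∧
    Nonempty (((Fin 2 → R) ⧸ LinearMap.range (!![φ g, -φ h; φ f, φ k]).mulVecLin) ≃ₗ[R]
      (Ideal.span {φ f, φ g} : Ideal R)) := by
  have hkernel := ker_pairMap_map_eq_range hφ hker hfg
  have hrange := range_pairMap (φ f) (φ g)
  exact ⟨hrange, hkernel, ⟨Submodule.quotEquivOfEq _ _ hkernel.symm ≪≫ₗ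
    (pairMap (φ f) (φ g)).quotKerEquivRange ≪≫ₗ LinearEquiv.ofEq _ _ hrange⟩⟩

end Hypersurface

section KeyRing

variable {A : Type*} [CommRing A] (γ δ s t : A)

theorem keyRel_eq_X_sub_C_mul_add :
    keyRel A γ δ s t = (X 0 - C s) * (X 0 + C s + C (γ * t)) +
      (X 1 - C t) * (C δ * X 1 + C (δ * t) + C γ * X 0) := by
  simp only [keyRel, map_add, map_mul, map_pow]
  ring

theorem kmk_surjective : Function.Surjective (kmk A γ δ s t) :=
  Ideal.Quotient.mk_surjective

theorem ker_kmk : RingHom.ker (kmk A γ δ s t) =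
    Ideal.span {(X 0 - C s) * (X 0 + C s + C (γ * t)) +
      (X 1 - C t) * (C δ * X 1 + C (δ * t) + C γ * X 0)} :=
  Ideal.mk_ker.trans (congrArg (fun w => Ideal.span {w}) (keyRel_eq_X_sub_C_mul_add γ δ s t))

end KeyRing

/-- The map `π : R² → R`, `π(a,b) = (u - s)·a - (v - t)·b`, has image the ideal
`J = (u - s, v - t)` and kernel the image of `β`; hence `coker β ≅ J` as `R`-modules. -/
theorem stmt9 {A : Type*} [CommRing A] (γ δ s t : A)
    (β : Matrix (Fin 2) (Fin 2) (KeyRing A γ δ s t))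
    (hβ : β = !![kmk A γ δ s t (X 1 - C t), kmk A γ δ s t (-(X 0 + C s + C (γ * t)));
                 kmk A γ δ s t (X 0 - C s),
                 kmk A γ δ s t (C δ * X 1 + C (δ * t) + C γ * X 0)]) :
    LinearMap.range (pairMap (kmk A γ δ s t (X 0 - C s)) (kmk A γ δ s t (X 1 - C t)))
        = (Ideal.span {kmk A γ δ s t (X 0 - C s), kmk A γ δ s t (X 1 - C t)} :
            Ideal (KeyRing A γ δ s t)) ∧
    LinearMap.ker (pairMap (kmk A γ δ s t (X 0 - C s)) (kmk A γ δ s t (X 1 - C t)))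
        = LinearMap.range β.mulVecLin ∧
    Nonempty (((Fin 2 → KeyRing A γ δ s t) ⧸ LinearMap.range β.mulVecLin) ≃ₗ[KeyRing A γ δ s t]
      (Ideal.span {kmk A γ δ s t (X 0 - C s), kmk A γ δ s t (X 1 - C t)} :
        Ideal (KeyRing A γ δ s t))) := by
  have hregular : IsWeaklyRegular (MvPolynomial (Fin 2) A)
      [X (0 : Fin 2) - C s, X (1 : Fin 2) - C t] :=
    isWeaklyRegular_map_X_sub_C (l := [0, 1]) (by decide) ![s, t]
  rw [hβ, map_neg]
  exact stmt9_general (kmk_surjective γ δ s t) (ker_kmk γ δ s t)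
    (ker_pairMap_of_isWeaklyRegular hregular)
end
end

section
/- Let A be a commutative ring, let γ, δ, s, t ∈ A with γ² − 4δ a unit in A, let q(X,Y) = X² + γXY + δY², let R = A[X,Y]/(q(X,Y) − q(s,t)), and let u, v be the images of X, Y in R. Let Q(R) be the total quotient ring of R with canonical map ι : R → Q(R), let ε = ι(u + s + γt)·ι(v − t)⁻¹ ∈ Q(R), and let J = (u − s, v − t) be the ideal of R generated by u − s and v − t. Then every element of Q(R) which multiplies ι(J) into ι(R) lies in ι(R) + ι(R)·ε; that is, if w ∈ Q(R) satisfies w·ι(j) ∈ ι(R) for all j ∈ J, then there exist r, a ∈ R with w = ι(r) + ι(a)·ε. -/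
set_option synthInstance.maxHeartbeats 1000000
set_option maxHeartbeats 2000000

noncomputable section
open MvPolynomial

/-- The canonical map `ι : R → Q(R)` into the total quotient ring (the localization of
`R` at its non-zero-divisors). -/
def keyι (A : Type*) [CommRing A] (γ δ s t : A) :
    KeyRing A γ δ s t →+* FractionRing (KeyRing A γ δ s t) :=
  algebraMap _ _

/-- `ε = ι(u + s + γt)·ι(v - t)⁻¹ ∈ Q(R)` (`ι(v - t)` is a unit in `Q(R)` since `v - t`
is a non-zero-divisor of `R`, so `Ring.inverse` computes its genuine inverse). -/
def keyEps (A : Type*) [CommRing A] (γ δ s t : A) : FractionRing (KeyRing A γ δ s t) :=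
  keyι A γ δ s t (kmk A γ δ s t (X 0 + C s + C (γ * t)))
    * Ring.inverse (keyι A γ δ s t (kmk A γ δ s t (X 1 - C t)))

/-!
Put `p = Y - t`, `f = X - s`, `g = X + s + γt`. Then `q(X,Y) - q(s,t) ≡ f g` modulo `p`, and `f`, `g`
are non-zero-divisors modulo `p`. Hence `p` stays a non-zero-divisor in `R`, and cancelling `f`
modulo `p` gives the colon ideal `(v - t) : (u - s) = (v - t, u + s + γt)` of `R`.
If `w` multiplies `J` into `R`, then `b = w (v - t)` satisfies `b (u - s) = (w (u - s)) (v - t)`, so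
`b` lies in that colon ideal; dividing by `v - t` gives `w ∈ R + R ε`.
-/

section QuotientByPrincipalIdeal

open scoped nonZeroDivisors

variable {P : Type*} [CommRing P] {p r f g : P}

theorem mk_span_singleton_mem_nonZeroDivisors_iff :
    Ideal.Quotient.mk (Ideal.span {p}) f ∈ (P ⧸ Ideal.span {p})⁰ ↔ ∀ a, p ∣ a * f → p ∣ a := by
  simp only [mem_nonZeroDivisors_iff_right, Ideal.Quotient.mk_surjective.forall, ← map_mul,
    Ideal.Quotient.eq_zero_iff_dvd]

theorem mk_mem_nonZeroDivisors_swap (hp : p ∈ P⁰)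
    (hr : Ideal.Quotient.mk (Ideal.span {p}) r ∈ (P ⧸ Ideal.span {p})⁰) :
    Ideal.Quotient.mk (Ideal.span {r}) p ∈ (P ⧸ Ideal.span {r})⁰ := by
  rw [mk_span_singleton_mem_nonZeroDivisors_iff] at hr ⊢
  rintro a ⟨k, hk⟩
  obtain ⟨l, rfl⟩ : p ∣ k := hr k ⟨a, by linear_combination -hk⟩
  exact ⟨l, (mul_cancel_right_mem_nonZeroDivisors hp).mp (by linear_combination hk)⟩

theorem colon_mk_eq_span_pair (hf : Ideal.Quotient.mk (Ideal.span {p}) f ∈ (P ⧸ Ideal.span {p})⁰)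
    (hfactor : p ∣ r - f * g) :
    (Ideal.span {Ideal.Quotient.mk (Ideal.span {r}) p}).colon
        {Ideal.Quotient.mk (Ideal.span {r}) f} =
      Ideal.span {Ideal.Quotient.mk (Ideal.span {r}) p, Ideal.Quotient.mk (Ideal.span {r}) g} := by
  rw [mk_span_singleton_mem_nonZeroDivisors_iff] at hf
  obtain ⟨h, hr⟩ := hfactor
  ext b
  obtain ⟨b, rfl⟩ := Ideal.Quotient.mk_surjective b
  simp only [Submodule.mem_colon_singleton, smul_eq_mul, Ideal.mem_span_singleton',
    Ideal.mem_span_pair, Ideal.Quotient.mk_surjective.exists, ← map_mul, ← map_add,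
    Ideal.Quotient.mk_eq_mk_iff_sub_mem]
  constructor
  · rintro ⟨c, k, hk⟩
    have hcancel : (b + k * g) * f = p * (c - k * h) := by linear_combination hk - k * hr
    obtain ⟨l, hl⟩ : p ∣ b + k * g := hf _ ⟨_, hcancel⟩
    exact ⟨l, -k, 0, by linear_combination hl⟩
  · rintro ⟨c, d, k, hk⟩
    exact ⟨c * f - d * h, k * f - d, by linear_combination f * hk - d * hr⟩

end QuotientByPrincipalIdeal

theorem exists_eq_add_mul_of_colon_le {R K : Type*} [CommRing R] [CommRing K] {φ : R →+* K}
    (hφ : Function.Injective φ) {x y z : R} (hy : IsUnit (φ y))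
    (hcolon : (Ideal.span {y}).colon {x} ≤ Ideal.span {y, z}) {w : K}
    (hwx : w * φ x ∈ Set.range φ) (hwy : w * φ y ∈ Set.range φ) :
    ∃ r a : R, w = φ r + φ a * (φ z * Ring.inverse (φ y)) := by
  obtain ⟨c, hc⟩ := hwx
  obtain ⟨b, hb⟩ := hwy
  have hbc : c * y = b * x := hφ (by simp only [map_mul, hb, hc]; ring)
  have hb_mem : b ∈ (Ideal.span {y}).colon {x} :=
    Submodule.mem_colon_singleton.mpr (Ideal.mem_span_singleton'.mpr ⟨c, hbc⟩)
  obtain ⟨r, a, rfl⟩ := Ideal.mem_span_pair.mp (hcolon hb_mem)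
  refine ⟨r, a, hy.mul_right_cancel ?_⟩
  simp only [add_mul, mul_assoc, Ring.inverse_mul_cancel _ hy, mul_one, ← hb, map_add, map_mul]

section MvPolynomialSpecialization

open scoped nonZeroDivisors

variable {σ A : Type*} [CommRing A]

theorem mem_nonZeroDivisors_of_leadingCoeff {m : MonomialOrder σ} {f : MvPolynomial σ A}
    (hf : m.leadingCoeff f ∈ A⁰) : f ∈ (MvPolynomial σ A)⁰ := by
  refine mem_nonZeroDivisors_iff_left.mpr fun g hfg => ?_
  have hlc := m.leadingCoeff_mul_of_left_mem_nonZeroDivisors (g := g) hf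
  rwa [hfg, m.leadingCoeff_zero, eq_comm, mul_left_mem_nonZeroDivisors_eq_zero_iff hf,
    m.leadingCoeff_eq_zero_iff] at hlc

theorem X_sub_C_mem_nonZeroDivisors (i : σ) (a : A) : X i - C a ∈ (MvPolynomial σ A)⁰ := by
  obtain ⟨_, _⟩ := exists_wellFoundedGT σ
  have hmonic := (MonomialOrder.lex.monic_X_sub_C i a).leadingCoeff_eq_one
  exact mem_nonZeroDivisors_of_leadingCoeff (hmonic ▸ one_mem _)

/-- The specialization `X i ↦ a` of polynomials, which identifies the quotient by `(X i - a)` with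
the polynomials in the other variables. It is encoded as an endomorphism, so that polynomials not
involving `X i` are fixed by it. -/
def specializeVar [DecidableEq σ] (i : σ) (a : A) : MvPolynomial σ A →ₐ[A] MvPolynomial σ A :=
  aeval (Function.update X i (C a))

theorem X_sub_C_dvd_sub_specializeVar [DecidableEq σ] (i : σ) (a : A) (f : MvPolynomial σ A) :
    X i - C a ∣ f - specializeVar i a f := by
  let π := Ideal.Quotient.mkₐ A (Ideal.span {(X i - C a : MvPolynomial σ A)})
  suffices hπ : π = π.comp (specializeVar i a) from
    Ideal.mem_span_singleton.mp (Ideal.Quotient.eq.mp (DFunLike.congr_fun hπ f))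
  refine MvPolynomial.algHom_ext fun j => ?_
  obtain rfl | hj := eq_or_ne j i
  · simpa [specializeVar, π] using Ideal.Quotient.eq.mpr (Ideal.mem_span_singleton_self (X j - C a))
  · simp [specializeVar, hj]

theorem X_sub_C_dvd_iff_specializeVar_eq_zero [DecidableEq σ] {i : σ} {a : A}
    {f : MvPolynomial σ A} : X i - C a ∣ f ↔ specializeVar i a f = 0 := by
  refine ⟨?_, fun hf => by simpa [hf] using X_sub_C_dvd_sub_specializeVar i a f⟩
  rintro ⟨g, rfl⟩
  simp [specializeVar, algebraMap_eq]

theorem mk_X_sub_C_mem_nonZeroDivisors {i j : σ} (hij : j ≠ i) (a b : A) :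
    Ideal.Quotient.mk (Ideal.span {X i - C a}) (X j - C b) ∈
      (MvPolynomial σ A ⧸ Ideal.span {X i - C a})⁰ := by
  classical
  have hfixed : specializeVar i a (X j - C b) = X j - C b := by
    simp [specializeVar, hij, algebraMap_eq]
  refine mk_span_singleton_mem_nonZeroDivisors_iff.mpr fun f hf => ?_
  rw [X_sub_C_dvd_iff_specializeVar_eq_zero] at hf ⊢
  rw [map_mul, hfixed] at hf
  exact (mul_right_mem_nonZeroDivisors_eq_zero_iff (X_sub_C_mem_nonZeroDivisors j b)).mp hf

end MvPolynomialSpecialization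

section KeyRing

open scoped nonZeroDivisors

variable {A : Type*} [CommRing A] (γ δ s t : A)

theorem X_one_sub_C_dvd_keyRel_sub :
    X 1 - C t ∣ keyRel A γ δ s t - (X 0 - C s) * (X 0 + C s + C (γ * t)) := by
  refine ⟨C γ * X 0 + C δ * (X 1 + C t), ?_⟩
  simp only [keyRel, map_add, map_mul, map_pow]
  ring

theorem mk_X_one_sub_C_keyRel_mem_nonZeroDivisors :
    Ideal.Quotient.mk (Ideal.span {X 1 - C t}) (keyRel A γ δ s t) ∈
      (MvPolynomial (Fin 2) A ⧸ Ideal.span {X 1 - C t})⁰ := by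
  have hfactor := Ideal.Quotient.eq.mpr
    (Ideal.mem_span_singleton.mpr (X_one_sub_C_dvd_keyRel_sub γ δ s t))
  have hroot : X 0 + C s + C (γ * t) = (X 0 - C (-(s + γ * t)) : MvPolynomial (Fin 2) A) := by
    simp only [map_neg, map_add]
    ring
  rw [hfactor, map_mul, hroot]
  exact mul_mem (mk_X_sub_C_mem_nonZeroDivisors zero_ne_one t s)
    (mk_X_sub_C_mem_nonZeroDivisors zero_ne_one t _)

theorem kmk_X_one_sub_C_mem_nonZeroDivisors :
    kmk A γ δ s t (X 1 - C t) ∈ (KeyRing A γ δ s t)⁰ :=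
  mk_mem_nonZeroDivisors_swap (X_sub_C_mem_nonZeroDivisors 1 t)
    (mk_X_one_sub_C_keyRel_mem_nonZeroDivisors γ δ s t)

theorem colon_kmk_X_zero_sub_C :
    (Ideal.span {kmk A γ δ s t (X 1 - C t)}).colon {kmk A γ δ s t (X 0 - C s)} =
      Ideal.span {kmk A γ δ s t (X 1 - C t), kmk A γ δ s t (X 0 + C s + C (γ * t))} :=
  colon_mk_eq_span_pair (mk_X_sub_C_mem_nonZeroDivisors zero_ne_one t s)
    (X_one_sub_C_dvd_keyRel_sub γ δ s t)

theorem isUnit_keyι_kmk_X_one_sub_C : IsUnit (keyι A γ δ s t (kmk A γ δ s t (X 1 - C t))) :=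
  IsLocalization.map_units _
    (⟨_, kmk_X_one_sub_C_mem_nonZeroDivisors γ δ s t⟩ : (KeyRing A γ δ s t)⁰)

end KeyRing

theorem stmt13_general {A : Type*} [CommRing A] (γ δ s t : A)
    (w : FractionRing (KeyRing A γ δ s t))
    (hw : ∀ j ∈ Ideal.span {kmk A γ δ s t (X 0 - C s), kmk A γ δ s t (X 1 - C t)},
      w * keyι A γ δ s t j ∈ Set.range (keyι A γ δ s t)) :
    ∃ r a : KeyRing A γ δ s t,
      w = keyι A γ δ s t r + keyι A γ δ s t a * keyEps A γ δ s t :=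
  exists_eq_add_mul_of_colon_le (IsFractionRing.injective _ _)
    (isUnit_keyι_kmk_X_one_sub_C γ δ s t) (colon_kmk_X_zero_sub_C γ δ s t).le
    (hw _ (Ideal.subset_span (Set.mem_insert _ _)))
    (hw _ (Ideal.subset_span (Set.mem_insert_of_mem _ rfl)))

/-- If `γ² - 4δ` is a unit, every element of the total quotient ring `Q(R)` that
multiplies the ideal `J = (u - s, v - t)` into `ι(R)` lies in `ι(R) + ι(R)·ε`. -/
theorem stmt13 {A : Type*} [CommRing A] (γ δ s t : A)
    (hdisc : IsUnit (γ ^ 2 - 4 * δ)) (w : FractionRing (KeyRing A γ δ s t))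
    (hw : ∀ j ∈ Ideal.span {kmk A γ δ s t (X 0 - C s), kmk A γ δ s t (X 1 - C t)},
      w * keyι A γ δ s t j ∈ Set.range (keyι A γ δ s t)) :
    ∃ r a : KeyRing A γ δ s t,
      w = keyι A γ δ s t r + keyι A γ δ s t a * keyEps A γ δ s t :=
  stmt13_general γ δ s t w hw
end
end
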